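/- Let (u_l, u_f) be a finite Stackelberg game with utilities in [0,1], n ≥ 2 follower actions, and inducibility gap Δ > 0. Then for every δ with 0 < δ < Δ, the δ-RSE leader utility satisfies u_RSE(δ) ≥ u_SSE − δ/Δ. -/

import Mathlib

open Finset Set

noncomputable section

/-- The simplex of mixed strategies over `m` actions. -/
def simplex (m : ℕ) : Set (Fin m → ℝ) := stdSimplex ℝ (Fin m)

/-- Mixed-strategy extension of a utility matrix: `u(x, j) = ∑ i, x i * u i j`. -/
def mixU {m n : ℕ} (u : Fin m → Fin n → ℝ) (x : Fin m → ℝ) (j : Fin n) : ℝ :=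
  ∑ i, x i * u i j

/-- The follower's δ-optimal response set (strict inequality):
`BR_δ(x) = {j : u_f(x,j) > max_{j'} u_f(x,j') - δ}`. -/
def BRd {m n : ℕ} (uf : Fin m → Fin n → ℝ) (δ : ℝ) (x : Fin m → ℝ) : Set (Fin n) :=
  {j | mixU uf x j > (⨆ j', mixU uf x j') - δ}

/-- The follower's exact best-response set. -/
def BR0 {m n : ℕ} (uf : Fin m → Fin n → ℝ) (x : Fin m → ℝ) : Set (Fin n) :=
  {j | mixU uf x j = ⨆ j', mixU uf x j'}

/-- Worst-case leader utility over the follower's δ-optimal response set: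
`min_{j ∈ BR_δ(x)} u_l(x, j)`. -/
def valBR {m n : ℕ} (ul uf : Fin m → Fin n → ℝ) (δ : ℝ) (x : Fin m → ℝ) : ℝ :=
  sInf (mixU ul x '' BRd uf δ x)

/-- The δ-RSE leader utility `u_RSE(δ) = sup_{x ∈ Δ^m} min_{j ∈ BR_δ(x)} u_l(x, j)`. -/
def uRSE {m n : ℕ} (ul uf : Fin m → Fin n → ℝ) (δ : ℝ) : ℝ :=
  sSup (valBR ul uf δ '' simplex m)

/-- The SSE leader utility `u_SSE = sup_{x ∈ Δ^m} max_{j ∈ BR_0(x)} u_l(x, j)`. -/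
def uSSE {m n : ℕ} (ul uf : Fin m → Fin n → ℝ) : ℝ :=
  sSup ((fun x => sSup (mixU ul x '' BR0 uf x)) '' simplex m)

/-- The maximin leader utility `u_MM = sup_{x ∈ Δ^m} min_{j ∈ [n]} u_l(x, j)`. -/
def uMM {m n : ℕ} (ul : Fin m → Fin n → ℝ) : ℝ :=
  sSup ((fun x => ⨅ j, mixU ul x j) '' simplex m)

/-- The inducibility gap
`Δ = min_{j} sup_{x ∈ Δ^m} min_{j' ≠ j} (u_f(x, j) - u_f(x, j'))`. -/
def indGap {m n : ℕ} (uf : Fin m → Fin n → ℝ) : ℝ :=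
  ⨅ j, sSup ((fun x => ⨅ j' : {k : Fin n // k ≠ j}, (mixU uf x j - mixU uf x j'.1)) '' simplex m)

/-!
Let `x` be a leader strategy and `j ∈ BR_0(x)`, and let `z` be a strategy at which the follower
prefers `j` to every other action by at least the inducibility gap `Δ`. Moving a fraction `δ / Δ`
of the way from `x` to `z` makes `j` better by at least `δ` than every other action, hence the only
`δ`-optimal response. As long as the follower plays `j`, changing the leader's strategy changes her
utility by at most `1`, so the move costs her at most `δ / Δ`.
-/

section MixedUtility

variable {m n : ℕ} (u : Fin m → Fin n → ℝ)

lemma mixU_mem_of_convex {s : Set ℝ} (hs : Convex ℝ s) {j : Fin n} (hu : ∀ i, u i j ∈ s)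
    {x : Fin m → ℝ} (hx : x ∈ simplex m) : mixU u x j ∈ s :=
  hs.sum_mem (fun i _ => hx.1 i) hx.2 fun i _ => hu i

lemma mixU_smul_add_smul (s t : ℝ) (x y : Fin m → ℝ) (j : Fin n) :
    mixU u (s • x + t • y) j = s * mixU u x j + t * mixU u y j := by
  change (s • x + t • y) ⬝ᵥ (u · j) = s * (x ⬝ᵥ (u · j)) + t * (y ⬝ᵥ (u · j))
  rw [add_dotProduct, smul_dotProduct, smul_dotProduct, smul_eq_mul, smul_eq_mul]

lemma continuous_mixU (j : Fin n) : Continuous fun x => mixU u x j := by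
  unfold mixU
  fun_prop

end MixedUtility

section BestResponse

variable {m n : ℕ} {uf : Fin m → Fin n → ℝ} {δ : ℝ} {x : Fin m → ℝ} {j : Fin n}

lemma BR0_nonempty [Nonempty (Fin n)] (uf : Fin m → Fin n → ℝ) (x : Fin m → ℝ) :
    (BR0 uf x).Nonempty :=
  exists_eq_ciSup_of_finite (f := mixU uf x)

lemma mixU_le_of_mem_BR0 (hj : j ∈ BR0 uf x) (k : Fin n) : mixU uf x k ≤ mixU uf x j :=
  (Finite.le_ciSup (mixU uf x) k).trans_eq hj.symm

lemma BR0_subset_BRd (hδ : 0 < δ) : BR0 uf x ⊆ BRd uf δ x :=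
  fun _ hk => (sub_lt_self _ hδ).trans_eq hk.symm

end BestResponse

/-- The strategy `x` induces the follower action `j` with margin `D`: against `x`, the follower
loses at least `D` by playing any other action. The inducibility gap is the largest margin with
which every action can be induced. -/
def Induces {m n : ℕ} (uf : Fin m → Fin n → ℝ) (D : ℝ) (x : Fin m → ℝ) (j : Fin n) : Prop :=
  ∀ k ≠ j, mixU uf x k + D ≤ mixU uf x j

section Induces

variable {m n : ℕ} {uf : Fin m → Fin n → ℝ} {D t δ : ℝ} {x z : Fin m → ℝ} {j : Fin n}

lemma Induces.BRd_eq_singleton (h : Induces uf δ x j) (hδ : 0 < δ) : BRd uf δ x = {j} := by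
  have : Nonempty (Fin n) := ⟨j⟩
  have j_max : ⨆ k, mixU uf x k = mixU uf x j := by
    refine le_antisymm (ciSup_le fun k => ?_) (Finite.le_ciSup (mixU uf x) j)
    obtain rfl | hk := eq_or_ne k j
    · rfl
    · linarith [h k hk]
  refine Subset.antisymm (fun k hk => ?_) (singleton_subset_iff.2 (BR0_subset_BRd hδ j_max.symm))
  by_contra hkj
  have : mixU uf x j - δ < mixU uf x k := j_max ▸ hk
  linarith [h k hkj]

lemma Induces.mix_of_mem_BR0 (hz : Induces uf D z j) (hj : j ∈ BR0 uf x) (ht₀ : 0 ≤ t)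
    (ht₁ : t ≤ 1) : Induces uf (t * D) ((1 - t) • x + t • z) j := by
  intro k hk
  calc mixU uf ((1 - t) • x + t • z) k + t * D
      = (1 - t) * mixU uf x k + t * (mixU uf z k + D) := by rw [mixU_smul_add_smul]; ring
    _ ≤ (1 - t) * mixU uf x j + t * mixU uf z j := by
        gcongr
        · exact mixU_le_of_mem_BR0 hj k
        · exact hz k hk
    _ = mixU uf ((1 - t) • x + t • z) j := (mixU_smul_add_smul ..).symm

end Induces

section InducibilityGap

variable {m n : ℕ} {uf : Fin m → Fin n → ℝ}

lemma nonempty_of_indGap_pos (h : 0 < indGap uf) : Nonempty (Fin n) := by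
  by_contra! hn
  exact h.ne' (Real.iInf_of_isEmpty _)

lemma simplex_nonempty_of_indGap_pos (h : 0 < indGap uf) : (simplex m).Nonempty := by
  by_contra! hm
  refine h.ne' ?_
  simp only [indGap, hm, image_empty, Real.sSup_empty, Real.iInf_const_zero]

lemma exists_induces_indGap (uf : Fin m → Fin n → ℝ) (hne : (simplex m).Nonempty) (j : Fin n) :
    ∃ z ∈ simplex m, Induces uf (indGap uf) z j := by
  let margin (x : Fin m → ℝ) : ℝ := ⨅ k : {k : Fin n // k ≠ j}, (mixU uf x j - mixU uf x k)
  have usc : UpperSemicontinuous margin :=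
    upperSemicontinuous_ciInf (fun _ => (finite_range _).bddBelow) fun k =>
      ((continuous_mixU uf j).sub (continuous_mixU uf k)).upperSemicontinuous
  obtain ⟨z, hz, z_max⟩ := (usc.upperSemicontinuousOn _).exists_isMaxOn hne
    (isCompact_stdSimplex ℝ (Fin m))
  refine ⟨z, hz, fun k hk => le_sub_iff_add_le'.1 ?_⟩
  calc indGap uf ≤ sSup (margin '' simplex m) := Finite.ciInf_le _ j
    _ ≤ margin z := csSup_le (hne.image _) (forall_mem_image.2 z_max)
    _ ≤ mixU uf z j - mixU uf z k :=
        Finite.ciInf_le (fun k : {k : Fin n // k ≠ j} => mixU uf z j - mixU uf z k) ⟨k, hk⟩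

end InducibilityGap

section LeaderUtility

variable {m n : ℕ} {ul uf : Fin m → Fin n → ℝ} {L c δ : ℝ} {x z : Fin m → ℝ} {j : Fin n}

lemma valBR_le_of_mem_BRd (hj : j ∈ BRd uf δ x) : valBR ul uf δ x ≤ mixU ul x j :=
  csInf_le ((toFinite _).image _).bddBelow (mem_image_of_mem _ hj)

lemma bddAbove_valBR_image_simplex [Nonempty (Fin n)] (hδ : 0 < δ) :
    BddAbove (valBR ul uf δ '' simplex m) := by
  obtain ⟨b, hb⟩ := (finite_range (Function.uncurry ul)).bddAbove
  refine ⟨b, forall_mem_image.2 fun x hx => ?_⟩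
  obtain ⟨k, hk⟩ := BR0_nonempty uf x
  exact (valBR_le_of_mem_BRd (BR0_subset_BRd hδ hk)).trans
    (mixU_mem_of_convex ul (convex_Iic b) (fun i => hb (mem_range_self (i, k))) hx)

lemma Induces.mixU_le_uRSE (h : Induces uf δ x j) (hδ : 0 < δ) (hx : x ∈ simplex m) :
    mixU ul x j ≤ uRSE ul uf δ := by
  have : Nonempty (Fin n) := ⟨j⟩
  have hval : valBR ul uf δ x = mixU ul x j := by
    rw [valBR, h.BRd_eq_singleton hδ, image_singleton, csInf_singleton]
  exact hval ▸ le_csSup (bddAbove_valBR_image_simplex hδ) (mem_image_of_mem _ hx)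

lemma uSSE_le [Nonempty (Fin n)] (hne : (simplex m).Nonempty)
    (h : ∀ x ∈ simplex m, ∀ j ∈ BR0 uf x, mixU ul x j ≤ c) : uSSE ul uf ≤ c :=
  csSup_le (hne.image _) <| forall_mem_image.2 fun x hx =>
    csSup_le ((BR0_nonempty uf x).image _) <| forall_mem_image.2 fun j hj => h x hx j hj

lemma mixU_sub_mixU_le (hul : ∀ i i', ul i j - ul i' j ≤ L) (hx : x ∈ simplex m)
    (hz : z ∈ simplex m) : mixU ul x j - mixU ul z j ≤ L := by
  have le_pure (i' : Fin m) : mixU ul x j ≤ L + ul i' j :=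
    mixU_mem_of_convex ul (convex_Iic _) (fun i => sub_le_iff_le_add.1 (hul i i')) hx
  exact sub_le_comm.1 <|
    mixU_mem_of_convex ul (convex_Ici _) (fun i' => sub_le_iff_le_add'.2 (le_pure i')) hz

lemma mixU_sub_le_mixU_mix (hul : ∀ i i', ul i j - ul i' j ≤ L) {t : ℝ} (ht : 0 ≤ t)
    (hx : x ∈ simplex m) (hz : z ∈ simplex m) :
    mixU ul x j - L * t ≤ mixU ul ((1 - t) • x + t • z) j := by
  rw [mixU_smul_add_smul]
  linarith [mul_le_mul_of_nonneg_right (mixU_sub_mixU_le hul hx hz) ht]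

end LeaderUtility

theorem uRSE_ge_uSSE_sub_general {m n : ℕ} {ul uf : Fin m → Fin n → ℝ} {L δ : ℝ}
    (hul : ∀ i i' j, ul i j - ul i' j ≤ L) (hδ : 0 < δ) (hδΔ : δ ≤ indGap uf) :
    uSSE ul uf - L * (δ / indGap uf) ≤ uRSE ul uf δ := by
  have hΔ : 0 < indGap uf := hδ.trans_le hδΔ
  have : Nonempty (Fin n) := nonempty_of_indGap_pos hΔ
  have hne : (simplex m).Nonempty := simplex_nonempty_of_indGap_pos hΔ
  rw [sub_le_iff_le_add]
  refine uSSE_le hne fun x hx j hj => ?_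
  rw [← sub_le_iff_le_add]
  obtain ⟨z, hz, z_induces⟩ := exists_induces_indGap uf hne j
  set t := δ / indGap uf
  have ht₀ : 0 ≤ t := (div_pos hδ hΔ).le
  have ht₁ : t ≤ 1 := (div_le_one hΔ).2 hδΔ
  have y_mem : (1 - t) • x + t • z ∈ simplex m :=
    convex_stdSimplex ℝ (Fin m) hx hz (sub_nonneg.2 ht₁) ht₀ (sub_add_cancel 1 t)
  have y_induces : Induces uf δ ((1 - t) • x + t • z) j :=
    div_mul_cancel₀ δ hΔ.ne' ▸ z_induces.mix_of_mem_BR0 hj ht₀ ht₁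
  exact (mixU_sub_le_mixU_mix (hul · · j) ht₀ hx hz).trans (y_induces.mixU_le_uRSE hδ y_mem)

/-- `u_RSE(δ) ≥ u_SSE − δ/Δ` for `0 < δ < Δ`. -/
theorem uRSE_ge_uSSE_sub (m n : ℕ) (hn : 2 ≤ n) (ul uf : Fin m → Fin n → ℝ)
    (hul : ∀ i j, ul i j ∈ Set.Icc (0:ℝ) 1) (huf : ∀ i j, uf i j ∈ Set.Icc (0:ℝ) 1)
    (hΔ : 0 < indGap uf) (δ : ℝ) (hδ : 0 < δ) (hδΔ : δ < indGap uf) :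
    uSSE ul uf - δ / indGap uf ≤ uRSE ul uf δ := by
  have hul' (i i' j) : ul i j - ul i' j ≤ 1 := by linarith [(hul i j).2, (hul i' j).1]
  simpa only [one_mul] using uRSE_ge_uSSE_sub_general hul' hδ hδΔ.le
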